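/- arXiv:1304.1576 — 6 statements merged into one kernel-verified Lean document; each statement's English description precedes it below -/
import Mathlib

section
/- Let B be a nontrivial Boolean algebra and X ⊆ B a subset whose only lower bound in B is ⊥ (that is, for every b ∈ B, if b ≤ x for all x ∈ X then b = ⊥). Let S be the set of Boolean algebra homomorphisms from B to Bool (maps preserving ⊤, ⊥, ⊓, ⊔ and complement), topologized as a subspace of the product space B → Bool with Bool discrete. Then the set {f ∈ S : f x = true for all x ∈ X} is closed in S and has empty interior in S. -/
/-- A Boolean algebra homomorphism into `Bool`, as a predicate on functions. -/
def IsBoolHom {B : Type*} [BooleanAlgebra B] (f : B → Bool) : Prop :=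
  f ⊤ = true ∧ f ⊥ = false ∧ (∀ x y, f (x ⊓ y) = (f x && f y)) ∧
    (∀ x y, f (x ⊔ y) = (f x || f y)) ∧ (∀ x, f xᶜ = !f x)

theorem exists_hom_aux {B : Type*} [BooleanAlgebra B] (c : B) (hc : c ≠ ⊥) :
    ∃ g : B → Bool, IsBoolHom g ∧ g c = true := by
  classical
  obtain ⟨J, hJ, -, hd⟩ := DistribLattice.prime_ideal_of_disjoint_filter_ideal
    (F := Order.PFilter.principal c) (I := Order.Ideal.principal (⊥ : B)) (by
      rw [Set.disjoint_left]
      intro a ha hb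
      have h1 : c ≤ a := by simpa using ha
      have h2 : a = ⊥ := le_bot_iff.1 (Order.Ideal.mem_principal.1 hb)
      exact hc (le_bot_iff.1 (h2 ▸ h1)))
  have hcJ : c ∉ J := fun h => Set.disjoint_left.1 hd (show c ∈ Order.PFilter.principal c by simp) h
  have hbot : (⊥ : B) ∈ J := J.bot_mem
  have htop : (⊤ : B) ∉ J := fun h => hcJ (J.lower le_top h)
  have hinf : ∀ x y : B, x ⊓ y ∈ J ↔ x ∈ J ∨ y ∈ J := fun x y =>
    ⟨fun h => hJ.mem_or_mem h, fun h => h.elim (fun h => J.lower inf_le_left h)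
      (fun h => J.lower inf_le_right h)⟩
  have hsup : ∀ x y : B, x ⊔ y ∈ J ↔ x ∈ J ∧ y ∈ J := fun x y => Order.Ideal.sup_mem_iff
  have hcompl : ∀ x : B, xᶜ ∈ J ↔ x ∉ J := by
    intro x
    have h1 := hinf x xᶜ
    have h2 := hsup x xᶜ
    rw [inf_compl_eq_bot] at h1
    rw [sup_compl_eq_top] at h2
    tauto
  refine ⟨fun x => decide (x ∉ J), ⟨?_, ?_, ?_, ?_, ?_⟩, ?_⟩
  · simpa using htop
  · simp
  · intro x y
    simp [hinf]
  · intro x y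
    by_cases hx : x ∈ J <;> by_cases hy : y ∈ J <;> simp [hsup, hx, hy]
  · intro x
    simp [hcompl]
  · simpa using hcJ

theorem hom_finset_inf_aux {B : Type*} [BooleanAlgebra B] (g : B → Bool) (hg : IsBoolHom g)
    (I : Finset B) (u : B → B) : g (I.inf u) = true ↔ ∀ i ∈ I, g (u i) = true := by
  classical
  induction I using Finset.induction_on with
  | empty => simp [hg.1]
  | insert a s _ ih => simp [Finset.inf_insert, hg.2.2.1, ih]

theorem stone_nowhere_dense {B : Type*} [BooleanAlgebra B] [Nontrivial B]
    (X : Set B) (hX : ∀ b : B, (∀ x ∈ X, b ≤ x) → b = ⊥) :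
    IsClosed {f : {g : B → Bool // IsBoolHom g} | ∀ x ∈ X, f.1 x = true} ∧
      interior {f : {g : B → Bool // IsBoolHom g} | ∀ x ∈ X, f.1 x = true} = ∅ := by
  constructor
  · have : {f : {g : B → Bool // IsBoolHom g} | ∀ x ∈ X, f.1 x = true} =
        ⋂ x ∈ X, {f : {g : B → Bool // IsBoolHom g} | f.1 x = true} := by
      ext f
      simp
    rw [this]
    exact isClosed_biInter fun x _ =>
      isClosed_eq ((continuous_apply x).comp continuous_subtype_val) continuous_const
  · rw [Set.eq_empty_iff_forall_notMem]
    intro f hf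
    obtain ⟨U, hUs, hU, hfU⟩ := mem_interior.1 hf
    obtain ⟨V, hV, rfl⟩ := isOpen_induced_iff.1 hU
    obtain ⟨I, u, hu, hI⟩ := isOpen_pi_iff.1 hV f.1 hfU
    let w : B → B := fun i => if f.1 i = true then i else iᶜ
    have hfb : f.1 (I.inf w) = true := by
      rw [hom_finset_inf_aux f.1 f.2]
      intro i _
      by_cases h : f.1 i = true
      · simp [w, h]
      · simp [w, h, f.2.2.2.2.2]
    have key : I.inf w = ⊥ := by
      apply hX
      intro x hx
      by_contra hle
      have hne : I.inf w ⊓ xᶜ ≠ ⊥ := fun h =>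
        hle (by rwa [← sdiff_eq, sdiff_eq_bot_iff] at h)
      obtain ⟨g, hg, hgc⟩ := exists_hom_aux _ hne
      rw [hg.2.2.1, hg.2.2.2.2, Bool.and_eq_true, hom_finset_inf_aux g hg] at hgc
      obtain ⟨h1, h2⟩ := hgc
      have hgV : g ∈ V := by
        apply hI
        intro i hi
        have h3 := h1 i hi
        have : g i = f.1 i := by
          by_cases h : f.1 i = true
          · simpa [w, h] using h3
          · simpa [w, h, hg.2.2.2.2] using h3
        rw [this]
        exact (hu i hi).2
      have h4 : g x = true := hUs (show (⟨g, hg⟩ : {g : B → Bool // IsBoolHom g}) ∈ _ from hgV) x hx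
      simp [h4] at h2
    rw [key, f.2.2.1] at hfb
    exact Bool.false_ne_true hfb
end

section
/- Let B be a countable Boolean algebra, let a ∈ B with a ≠ ⊥, and for each n ∈ ℕ let X_n ⊆ B and b_n ∈ B be such that b_n is the least upper bound (supremum) of X_n in B. Then there exists an ultrafilter F of B such that a ∈ F and, for every n, if b_n ∈ F then there exists x ∈ X_n with x ∈ F. -/
/-- An ultrafilter of a Boolean algebra, as a set. -/
def IsBoolUltrafilter {B : Type*} [BooleanAlgebra B] (F : Set B) : Prop :=
  ⊤ ∈ F ∧ ⊥ ∉ F ∧ (∀ x ∈ F, ∀ y : B, x ≤ y → y ∈ F) ∧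
    (∀ x ∈ F, ∀ y ∈ F, x ⊓ y ∈ F) ∧ (∀ x : B, x ∈ F ∨ xᶜ ∈ F)

theorem step_aux {B : Type*} [BooleanAlgebra B] (c e b : B) (X : Set B) (h : IsLUB X b)
    (hc : c ≠ ⊥) : ∃ d : B, d ≠ ⊥ ∧ d ≤ c ∧ (d ≤ e ∨ d ≤ eᶜ) ∧ (d ≤ bᶜ ∨ ∃ x ∈ X, d ≤ x) := by
  have h1 : ∃ d : B, d ≠ ⊥ ∧ d ≤ c ∧ (d ≤ e ∨ d ≤ eᶜ) := by
    by_cases h1 : c ⊓ e = ⊥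
    · exact ⟨c, hc, le_rfl, Or.inr (le_compl_iff_disjoint_right.2 (disjoint_iff.2 h1))⟩
    · exact ⟨c ⊓ e, h1, inf_le_left, Or.inl inf_le_right⟩
  obtain ⟨d, hd, hdc, hde⟩ := h1
  by_cases h2 : ∃ x ∈ X, d ⊓ x ≠ ⊥
  · obtain ⟨x, hx, hdx⟩ := h2
    exact ⟨d ⊓ x, hdx, inf_le_left.trans hdc, hde.imp inf_le_left.trans inf_le_left.trans,
      Or.inr ⟨x, hx, inf_le_right⟩⟩
  · push Not at h2
    refine ⟨d, hd, hdc, hde, Or.inl ?_⟩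
    have : b ≤ dᶜ := h.2 fun x hx =>
      le_compl_iff_disjoint_left.2 (disjoint_iff.2 (h2 x hx))
    exact le_compl_comm.1 this

theorem countable_sup_preserving_ultrafilter {B : Type*} [BooleanAlgebra B] [Countable B]
    (a : B) (ha : a ≠ ⊥) (X : ℕ → Set B) (b : ℕ → B)
    (hlub : ∀ n, IsLUB (X n) (b n)) :
    ∃ F : Set B, IsBoolUltrafilter F ∧ a ∈ F ∧
      ∀ n, b n ∈ F → ∃ x ∈ X n, x ∈ F := by
  obtain ⟨e, he⟩ := exists_surjective_nat B
  choose g hg0 hg1 hg2 hg3 using fun (c : {c : B // c ≠ ⊥}) (n : ℕ) =>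
    step_aux c.1 (e n) (b n) (X n) (hlub n) c.2
  let s : ℕ → {c : B // c ≠ ⊥} := fun n =>
    Nat.rec ⟨a, ha⟩ (fun n c => ⟨g c n, hg0 c n⟩) n
  have hs : ∀ n, (s (n + 1)).1 = g (s n) n := fun n => rfl
  have hanti : Antitone fun n => (s n).1 :=
    antitone_nat_of_succ_le fun n => by rw [hs]; exact hg1 _ _
  refine ⟨{y | ∃ n, (s n).1 ≤ y}, ⟨⟨0, le_top⟩, ?_, ?_, ?_, ?_⟩, ⟨0, le_rfl⟩, ?_⟩
  · rintro ⟨n, hn⟩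
    exact (s n).2 (le_bot_iff.1 hn)
  · rintro x ⟨n, hn⟩ y hxy
    exact ⟨n, hn.trans hxy⟩
  · rintro x ⟨n, hn⟩ y ⟨m, hm⟩
    exact ⟨max n m, le_inf ((hanti (le_max_left n m)).trans hn)
      ((hanti (le_max_right n m)).trans hm)⟩
  · intro x
    obtain ⟨n, rfl⟩ := he x
    exact (hg2 (s n) n).imp (fun h => ⟨n + 1, h⟩) (fun h => ⟨n + 1, h⟩)
  · rintro n ⟨m, hm⟩
    rcases hg3 (s n) n with h | ⟨x, hx, h⟩
    · exfalso
      apply (s (max (n + 1) m)).2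
      have h1 := (hanti (le_max_left (n + 1) m)).trans h
      have h2 := (hanti (le_max_right (n + 1) m)).trans hm
      exact le_bot_iff.1 ((le_inf h2 h1).trans (inf_compl_self (a := b n)).le)
    · exact ⟨x, hx, n + 1, h⟩
end

section
/- Let B be a countable Boolean algebra that is hereditary atomic, i.e., every Boolean subalgebra of B is an atomic Boolean algebra. Then the set of ultrafilters of B is at most countable. -/
/-- A Boolean subalgebra of `B`, as a subset. -/
def IsBoolSubalgebra {B : Type*} [BooleanAlgebra B] (C : Set B) : Prop :=
  ⊤ ∈ C ∧ ⊥ ∈ C ∧ (∀ x ∈ C, ∀ y ∈ C, x ⊓ y ∈ C) ∧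
    (∀ x ∈ C, ∀ y ∈ C, x ⊔ y ∈ C) ∧ (∀ x ∈ C, xᶜ ∈ C)

/-- The subalgebra carried by the subset `C` is atomic: below every nonzero element of `C`
there is a minimal nonzero element of `C`. -/
def SubalgAtomic {B : Type*} [BooleanAlgebra B] (C : Set B) : Prop :=
  ∀ x ∈ C, x ≠ ⊥ → ∃ a ∈ C, a ≠ ⊥ ∧ (∀ y ∈ C, y ≤ a → y = ⊥ ∨ y = a) ∧ a ≤ x

/-- Binary tree of elements obtained by repeatedly splitting with `f`. -/
def splitNode {B : Type*} [BooleanAlgebra B] (f : B → B) : List Bool → B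
  | [] => ⊤
  | true :: l => splitNode f l ⊓ f (splitNode f l)
  | false :: l => splitNode f l ⊓ (f (splitNode f l))ᶜ

theorem splitNode_cons_le {B : Type*} [BooleanAlgebra B] (f : B → B) (t : Bool) (l : List Bool) :
    splitNode f (t :: l) ≤ splitNode f l := by
  cases t <;> exact inf_le_left

theorem splitNode_disj {B : Type*} [BooleanAlgebra B] (f : B → B) (l : List Bool) :
    splitNode f (true :: l) ≤ (splitNode f (false :: l))ᶜ := by
  simp only [splitNode, compl_inf, compl_compl]
  exact le_trans inf_le_right le_sup_right

theorem splitNode_eq_or {B : Type*} [BooleanAlgebra B] (f : B → B) :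
    ∀ l m : List Bool, l.length = m.length → splitNode f l ≤ splitNode f m ∨
      splitNode f l ≤ (splitNode f m)ᶜ
  | [], [], _ => Or.inl le_rfl
  | s :: l, t :: m, h => by
    by_cases hlm : l = m
    · subst hlm
      have := splitNode_disj f l
      cases s <;> cases t
      · exact Or.inl le_rfl
      · exact Or.inr (le_compl_comm.1 this)
      · exact Or.inr this
      · exact Or.inl le_rfl
    · right
      have key : ∀ l m : List Bool, l.length = m.length → l ≠ m →
          splitNode f l ≤ (splitNode f m)ᶜ := by
        intro l
        induction l with
        | nil => intro m h hn; cases m <;> simp_all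
        | cons s l ih =>
          intro m h hn
          cases m with
          | nil => simp at h
          | cons t m =>
            by_cases hlm : l = m
            · subst hlm
              have := splitNode_disj f l
              cases s <;> cases t
              · exact absurd rfl hn
              · exact le_compl_comm.1 this
              · exact this
              · exact absurd rfl hn
            · exact (splitNode_cons_le f s l).trans ((ih m (by simpa using h) hlm).trans
                (compl_le_compl (splitNode_cons_le f t m)))
      exact key _ _ h (by simp [hlm])

theorem splitNode_cover {B : Type*} [BooleanAlgebra B] (f : B → B) (y : B) :
    ∀ n : ℕ, (∀ l : List Bool, l.length = n → splitNode f l ≤ yᶜ) → y = ⊥ := by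
  intro n
  induction n with
  | zero =>
    intro h
    have := h [] rfl
    simpa [splitNode] using this
  | succ n ih =>
    intro h
    apply ih
    intro l hl
    have h1 := h (true :: l) (by simp [hl])
    have h2 := h (false :: l) (by simp [hl])
    calc splitNode f l = splitNode f (true :: l) ⊔ splitNode f (false :: l) := by
          simp [splitNode, ← inf_sup_left]
      _ ≤ yᶜ := sup_le h1 h2

/-- The subalgebra generated by the splitting tree. -/
def splitAlg {B : Type*} [BooleanAlgebra B] (f : B → B) : Set B :=
  {x | ∃ n : ℕ, ∀ l : List Bool, n ≤ l.length → splitNode f l ≤ x ∨ splitNode f l ≤ xᶜ}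

theorem splitAlg_sub {B : Type*} [BooleanAlgebra B] (f : B → B) :
    IsBoolSubalgebra (splitAlg f) := by
  have hc : ∀ x ∈ splitAlg f, xᶜ ∈ splitAlg f := by
    rintro x ⟨n, hn⟩
    exact ⟨n, fun l hl => by rw [compl_compl]; exact (hn l hl).symm⟩
  have hi : ∀ x ∈ splitAlg f, ∀ y ∈ splitAlg f, x ⊓ y ∈ splitAlg f := by
    rintro x ⟨n, hn⟩ y ⟨m, hm⟩
    refine ⟨max n m, fun l hl => ?_⟩
    rw [compl_inf]
    rcases hn l (le_trans (le_max_left _ _) hl) with h | h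
    · rcases hm l (le_trans (le_max_right _ _) hl) with h' | h'
      · exact Or.inl (le_inf h h')
      · exact Or.inr (h'.trans le_sup_right)
    · exact Or.inr (h.trans le_sup_left)
  refine ⟨⟨0, fun l _ => Or.inl le_top⟩, ⟨0, fun l _ => Or.inr (by simp)⟩, hi, ?_, hc⟩
  intro x hx y hy
  have := hc _ (hi _ (hc x hx) _ (hc y hy))
  simpa using this

theorem splitNode_mem {B : Type*} [BooleanAlgebra B] (f : B → B) (m : List Bool) :
    splitNode f m ∈ splitAlg f := by
  refine ⟨m.length, fun l => ?_⟩
  induction l with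
  | nil => intro h; exact splitNode_eq_or f _ _ (by simp at h; simp [h])
  | cons t l ih =>
    intro h
    by_cases h' : m.length ≤ l.length
    · exact (ih h').imp (splitNode_cons_le f t l).trans (splitNode_cons_le f t l).trans
    · exact splitNode_eq_or f _ _ (by simp at h ⊢; omega)

theorem splitAlg_not_atomic {B : Type*} [BooleanAlgebra B] (f : B → B)
    (hf : ∀ l, splitNode f l ≠ ⊥) : ¬ SubalgAtomic (splitAlg f) := by
  intro h
  obtain ⟨a, ⟨n, hn⟩, ha, hmin, -⟩ := h ⊤ (splitAlg_sub f).1 (hf [])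
  have : ∃ l : List Bool, splitNode f l ≤ a := by
    by_contra hcon
    push Not at hcon
    exact ha (splitNode_cover f a n fun l hl => (hn l hl.ge).resolve_left (hcon l))
  obtain ⟨l, hl⟩ := this
  have e : ∀ t, splitNode f (t :: l) = a := fun t =>
    (hmin _ (splitNode_mem f _) ((splitNode_cons_le f t l).trans hl)).resolve_left (hf _)
  have := splitNode_disj f l
  rw [e, e, le_compl_self] at this
  exact ha this

theorem exists_split {B : Type*} [BooleanAlgebra B] [Countable B] (b : B)
    (hb : ¬ {F : Set B | IsBoolUltrafilter F ∧ b ∈ F}.Countable) :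
    ∃ c : B, ¬ {F : Set B | IsBoolUltrafilter F ∧ b ⊓ c ∈ F}.Countable ∧
      ¬ {F : Set B | IsBoolUltrafilter F ∧ b ⊓ cᶜ ∈ F}.Countable := by
  by_contra hcon
  push Not at hcon
  apply hb
  let S : Set B := {c | {F : Set B | IsBoolUltrafilter F ∧ b ⊓ c ∈ F}.Countable}
  let R : Set (Set B) := {F | IsBoolUltrafilter F ∧ b ∈ F ∧ ∀ c ∈ F, c ∉ S}
  have hR : R.Countable := by
    apply Set.Subsingleton.countable
    have key : ∀ F ∈ R, ∀ G ∈ R, F ⊆ G := by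
      intro F hF G hG c hc
      refine (hG.1.2.2.2.2 c).resolve_right fun hc' => ?_
      exact hG.2.2 _ hc' (hcon c (hF.2.2 c hc))
    exact fun F hF G hG => (key F hF G hG).antisymm (key G hG F hF)
  have hU : (⋃ c ∈ S, {F : Set B | IsBoolUltrafilter F ∧ b ⊓ c ∈ F}).Countable :=
    S.to_countable.biUnion fun c hc => hc
  refine (hR.union hU).mono ?_
  rintro F ⟨hF, hbF⟩
  by_cases h : ∀ c ∈ F, c ∉ S
  · exact Or.inl ⟨hF, hbF, h⟩
  · push Not at h
    obtain ⟨c, hc, hcS⟩ := h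
    exact Or.inr (Set.mem_biUnion hcS ⟨hF, hF.2.2.2.1 b hbF c hc⟩)

theorem hereditary_atomic_countably_many_ultrafilters {B : Type*} [BooleanAlgebra B]
    [Countable B] (hha : ∀ C : Set B, IsBoolSubalgebra C → SubalgAtomic C) :
    {F : Set B | IsBoolUltrafilter F}.Countable := by
  by_contra hunc
  choose! f hf using exists_split (B := B)
  have big : ∀ l, ¬ {F : Set B | IsBoolUltrafilter F ∧ splitNode f l ∈ F}.Countable := by
    intro l
    induction l with
    | nil =>
      intro h
      refine hunc (h.mono ?_)
      intro F hF
      exact ⟨hF, hF.1⟩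
    | cons t l ih =>
      cases t
      · exact (hf _ ih).2
      · exact (hf _ ih).1
  refine splitAlg_not_atomic f (fun l hl => big l ?_) (hha _ (splitAlg_sub f))
  rw [hl]
  convert Set.countable_empty
  ext F
  simp only [Set.mem_ofPred_eq, Set.mem_empty_iff_false, iff_false]
  exact fun h => h.1.2.1 h.2
end

section
/- Let B be a countable Boolean algebra that is not hereditary atomic, i.e., B has a Boolean subalgebra that is not atomic. Then the set of ultrafilters of B has cardinality 2^ℵ₀. -/
/-- The first `n` bits of a binary sequence, most recent bit first. -/
def firstBits (g : ℕ → Bool) : ℕ → List Bool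
  | 0 => []
  | n + 1 => g n :: firstBits g n

/-- The tree of elements obtained from a splitting function `s`. -/
def splitTree {B : Type*} [BooleanAlgebra B] (x : B) (s : B → B) : List Bool → B
  | [] => x
  | b :: l => if b then s (splitTree x s l) else splitTree x s l \ s (splitTree x s l)

theorem exists_ultrafilter_of_antitone {B : Type*} [BooleanAlgebra B] (c : ℕ → B)
    (hc : Antitone c) (h0 : ∀ n, c n ≠ ⊥) :
    ∃ F : Set B, IsBoolUltrafilter F ∧ ∀ n, c n ∈ F := by
  have hF : Order.IsPFilter {b : B | ∃ n, c n ≤ b} := by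
    refine Order.IsPFilter.of_def ⟨c 0, 0, le_rfl⟩ ?_ ?_
    · rintro a ⟨n, hn⟩ b ⟨m, hm⟩
      exact ⟨c (max n m), ⟨_, le_rfl⟩, (hc (le_max_left n m)).trans hn,
        (hc (le_max_right n m)).trans hm⟩
    · rintro a b hab ⟨n, hn⟩
      exact ⟨n, hn.trans hab⟩
  have hmem : ∀ b, b ∈ (hF.toPFilter : Set B) ↔ ∃ n, c n ≤ b := fun b => Iff.rfl
  obtain ⟨J, hJ, -, hd⟩ := DistribLattice.prime_ideal_of_disjoint_filter_ideal
    (F := hF.toPFilter) (I := Order.Ideal.principal (⊥ : B)) (by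
      rw [Set.disjoint_left]
      rintro b hb hb'
      obtain ⟨n, hn⟩ := (hmem b).1 hb
      have : b ≤ ⊥ := hb'
      exact h0 n (le_bot_iff.1 (hn.trans this)))
  have hcJ : ∀ n, c n ∉ J := fun n =>
    Set.disjoint_left.1 hd ((hmem _).2 ⟨n, le_rfl⟩)
  refine ⟨{b | b ∉ J}, ⟨?_, ?_, ?_, ?_, ?_⟩, hcJ⟩
  · exact fun h => hcJ 0 (J.lower le_top h)
  · exact fun h => h J.bot_mem
  · exact fun a ha b hab hb => ha (J.lower hab hb)
  · intro a ha b hb hab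
    rcases hJ.mem_or_mem hab with h | h
    · exact ha h
    · exact hb h
  · intro a
    by_contra! h
    have h1 : a ∈ J := not_not.1 h.1
    have h2 : aᶜ ∈ J := not_not.1 h.2
    have := J.sup_mem h1 h2
    rw [sup_compl_eq_top] at this
    exact hcJ 0 (J.lower le_top this)


theorem not_hereditary_atomic_continuum_many_ultrafilters {B : Type*} [BooleanAlgebra B]
    [Countable B] (hC : ∃ C : Set B, IsBoolSubalgebra C ∧ ¬ SubalgAtomic C) :
    Cardinal.mk {F : Set B // IsBoolUltrafilter F} = 2 ^ Cardinal.aleph0 := by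
  apply le_antisymm
  · refine (Cardinal.mk_subtype_le _).trans ?_
    rw [Cardinal.mk_set]
    exact Cardinal.power_le_power_left two_ne_zero (Cardinal.mk_le_aleph0)
  obtain ⟨C, ⟨-, -, hinf, -, hcompl⟩, hna⟩ := hC
  unfold SubalgAtomic at hna
  push Not at hna
  obtain ⟨x, hxC, hx0, hx⟩ := hna
  have hsplit : ∀ a : B, ∃ y : B, (a ∈ C ∧ a ≠ ⊥ ∧ a ≤ x) →
      y ∈ C ∧ y ≤ a ∧ y ≠ ⊥ ∧ y ≠ a := by
    intro a
    by_cases h : a ∈ C ∧ a ≠ ⊥ ∧ a ≤ x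
    · by_contra! hcon
      refine hx a h.1 h.2.1 ?_ h.2.2
      intro y hy hya
      by_contra! h3
      exact h3.2 ((hcon y).2 hy hya h3.1)
    · exact ⟨a, fun h' => absurd h' h⟩
  choose s hs using hsplit
  have htree : ∀ l, splitTree x s l ∈ C ∧ splitTree x s l ≠ ⊥ ∧ splitTree x s l ≤ x := by
    intro l
    induction l with
    | nil => exact ⟨hxC, hx0, le_rfl⟩
    | cons b l ih =>
      obtain ⟨h1, h2, h3, h4⟩ := hs _ ih
      cases b
      · simp only [splitTree, Bool.false_eq_true, if_false]
        refine ⟨?_, ?_, sdiff_le.trans ih.2.2⟩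
        · rw [sdiff_eq]
          exact hinf _ ih.1 _ (hcompl _ h1)
        · intro h
          exact h4 (le_antisymm h2 (sdiff_eq_bot_iff.1 h))
      · simp only [splitTree, if_true]
        exact ⟨h1, h3, h2.trans ih.2.2⟩
  have hanti : ∀ g : ℕ → Bool, Antitone fun n => splitTree x s (firstBits g n) := by
    intro g
    refine antitone_nat_of_succ_le fun n => ?_
    simp only [firstBits, splitTree]
    split_ifs
    · exact (hs _ (htree _)).2.1
    · exact sdiff_le
  choose U hU hUm using fun g : ℕ → Bool =>
    exists_ultrafilter_of_antitone _ (hanti g) (fun n => (htree _).2.1)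
  have hinj : Function.Injective
      (fun g : ℕ → Bool => (⟨U g, hU g⟩ : {F : Set B // IsBoolUltrafilter F})) := by
    intro g h hgh
    have hUU : U g = U h := congrArg Subtype.val hgh
    have key : ∀ n, firstBits g n = firstBits h n → g n = h n := by
      intro n hn
      have h1 := hUm g (n + 1)
      have h2 := hUm h (n + 1)
      rw [← hUU] at h2
      have h3 := (hU g).2.2.2.1 _ h1 _ h2
      simp only [firstBits, splitTree, ← hn] at h3
      cases hg : g n <;> cases hh : h n <;> simp [hg, hh] at h3 ⊢ <;>
        exact (hU g).2.1 h3
    have hp : ∀ n, firstBits g n = firstBits h n := by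
      intro n
      induction n with
      | zero => rfl
      | succ n ih => simp only [firstBits, ih, key n ih]
    exact funext fun n => key n (hp n)
  have := Cardinal.lift_mk_le_lift_mk_of_injective hinj
  simpa using this
end

section
/- Let B be a Boolean algebra that is generated by its atoms, i.e., the smallest Boolean subalgebra of B containing all atoms of B is B itself. Then B is hereditary atomic: every Boolean subalgebra of B is atomic. -/
theorem finite_Iic_sup_aux {B : Type*} [BooleanAlgebra B] {x y : B}
    (hx : (Set.Iic x).Finite) (hy : (Set.Iic y).Finite) : (Set.Iic (x ⊔ y)).Finite := by
  refine (Set.Finite.image2 (fun a b => a ⊔ b) hx hy).subset ?_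
  intro z hz
  refine ⟨z ⊓ x, inf_le_right, z ⊓ y, inf_le_right, ?_⟩
  change z ⊓ x ⊔ z ⊓ y = z
  rw [← inf_sup_left]
  exact inf_eq_left.2 hz

theorem finite_Iic_mono_aux {B : Type*} [BooleanAlgebra B] {x y : B}
    (hxy : x ≤ y) (hy : (Set.Iic y).Finite) : (Set.Iic x).Finite :=
  hy.subset (Set.Iic_subset_Iic.2 hxy)

theorem generated_by_atoms_hereditary_atomic {B : Type*} [BooleanAlgebra B]
    (hgen : ∀ C : Set B, IsBoolSubalgebra C → (∀ a : B, IsAtom a → a ∈ C) → C = Set.univ) :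
    ∀ C : Set B, IsBoolSubalgebra C → SubalgAtomic C := by
  have hD : ∀ x : B, (Set.Iic x).Finite ∨ (Set.Iic xᶜ).Finite := by
    have h := hgen {x : B | (Set.Iic x).Finite ∨ (Set.Iic xᶜ).Finite} ?_ ?_
    · intro x
      have : x ∈ {x : B | (Set.Iic x).Finite ∨ (Set.Iic xᶜ).Finite} := h ▸ Set.mem_univ x
      exact this
    · refine ⟨Or.inr (by simp), Or.inl (by simp), ?_, ?_, ?_⟩
      · rintro x (hx | hx) y (hy | hy)
        · exact Or.inl (finite_Iic_mono_aux inf_le_left hx)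
        · exact Or.inl (finite_Iic_mono_aux inf_le_left hx)
        · exact Or.inl (finite_Iic_mono_aux inf_le_right hy)
        · right
          rw [compl_inf]
          exact finite_Iic_sup_aux hx hy
      · rintro x (hx | hx) y (hy | hy)
        · exact Or.inl (finite_Iic_sup_aux hx hy)
        · exact Or.inr (finite_Iic_mono_aux (compl_le_compl le_sup_right) hy)
        · exact Or.inr (finite_Iic_mono_aux (compl_le_compl le_sup_left) hx)
        · exact Or.inr (finite_Iic_mono_aux (compl_le_compl le_sup_left) hx)
      · rintro x (hx | hx)
        · right
          rwa [compl_compl]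
        · exact Or.inl hx
    · intro a ha
      left
      rw [ha.Iic_eq]
      exact Set.toFinite _
  rintro C ⟨-, -, hinf, -, hcompl⟩ x hx hx0
  by_cases hex : ∃ y ∈ C, y ≠ ⊥ ∧ y ≤ x ∧ (Set.Iic y).Finite
  · obtain ⟨y, hyC, hy0, hyx, hyf⟩ := hex
    have hfin : {z | z ∈ C ∧ z ≠ ⊥ ∧ z ≤ y}.Finite := hyf.subset fun z hz => hz.2.2
    obtain ⟨a, ha⟩ := hfin.exists_minimal ⟨y, hyC, hy0, le_rfl⟩
    refine ⟨a, ha.prop.1, ha.prop.2.1, ?_, ha.prop.2.2.trans hyx⟩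
    intro z hzC hza
    by_cases hz0 : z = ⊥
    · exact Or.inl hz0
    · exact Or.inr (le_antisymm hza
        (ha.le_of_le ⟨hzC, hz0, hza.trans ha.prop.2.2⟩ hza))
  · refine ⟨x, hx, hx0, ?_, le_rfl⟩
    intro y hy hyx
    by_contra hne
    rw [not_or] at hne
    rcases hD y with h | h
    · exact hex ⟨y, hy, hne.1, hyx, h⟩
    · refine hex ⟨x ⊓ yᶜ, hinf x hx _ (hcompl y hy), ?_, inf_le_left,
        finite_Iic_mono_aux inf_le_right h⟩
      intro h0
      rw [← sdiff_eq, sdiff_eq_bot_iff] at h0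
      exact hne.2 (le_antisymm hyx h0)
end

section
/- Let B be an infinite complete Boolean algebra. Then B is not hereditary atomic; that is, B has a Boolean subalgebra that is not atomic. -/
lemma step_aux_s18 {B : Type*} [BooleanAlgebra B] (a : B) (ha : (Set.Iic a).Infinite) :
    ∃ b < a, (Set.Iic b).Infinite := by
  have h2 : ∃ b ∈ Set.Iic a, b ∉ ({⊥, a} : Set B) := by
    by_contra! h
    exact ha ((Set.toFinite ({⊥, a} : Set B)).subset h)
  obtain ⟨b, hb, hb'⟩ := h2
  simp only [Set.mem_insert_iff, Set.mem_singleton_iff, not_or, Set.mem_Iic] at hb hb'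
  have hlt : b < a := lt_of_le_of_ne hb hb'.2
  by_cases h : (Set.Iic b).Infinite
  · exact ⟨b, hlt, h⟩
  · refine ⟨a \ b, sdiff_lt hb hb'.1, fun hf => ha ?_⟩
    have hfin := (Set.not_infinite.1 h).prod hf
    refine (hfin.image (fun p : B × B => p.1 ⊔ p.2)).subset ?_
    intro x hx
    refine ⟨(x ⊓ b, x \ b), ⟨inf_le_right, sdiff_le_sdiff_right hx⟩, ?_⟩
    exact sup_inf_sdiff x b

lemma exists_disjoint_seq {B : Type*} [BooleanAlgebra B] [Infinite B] :
    ∃ d : ℕ → B, (∀ n, d n ≠ ⊥) ∧ ∀ m n, m < n → Disjoint (d m) (d n) := by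
  choose f hf hf' using fun a : {a : B // (Set.Iic a).Infinite} => step_aux_s18 a.1 a.2
  have htop : (Set.Iic (⊤ : B)).Infinite := by
    rw [Set.Iic_top]; exact Set.infinite_univ
  let g : ℕ → {a : B // (Set.Iic a).Infinite} := fun n =>
    Nat.rec ⟨⊤, htop⟩ (fun _ a => ⟨f a, hf' a⟩) n
  have hg : ∀ n, (g (n+1)).1 < (g n).1 := fun n => hf (g n)
  have hanti : Antitone (fun n => (g n).1) := antitone_nat_of_succ_le fun n => (hg n).le
  refine ⟨fun n => (g n).1 \ (g (n+1)).1, fun n h => ?_, fun m n hmn => ?_⟩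
  · exact (hg n).not_ge (sdiff_eq_bot_iff.1 h)
  · exact disjoint_sdiff_self_left.mono_right (sdiff_le.trans (hanti hmn))

lemma exists_partition {B : Type*} [CompleteBooleanAlgebra B] [Infinite B] :
    ∃ d : ℕ → B, (∀ n, d n ≠ ⊥) ∧ (∀ m n, m ≠ n → Disjoint (d m) (d n)) ∧
      ∀ x, (∀ n, d n ≤ x) → x = ⊤ := by
  obtain ⟨d, h0, hd⟩ := exists_disjoint_seq (B := B)
  have key : d 0 ≤ (⨆ n, d (n+1))ᶜ := by
    rw [le_compl_iff_disjoint_right, disjoint_iSup_iff]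
    exact fun n => hd _ _ (Nat.succ_pos n)
  have hz : ∀ n, Disjoint (⨆ n, d (n+1))ᶜ (d (n+1)) := fun n =>
    disjoint_compl_left.mono_right (le_iSup (fun n => d (n+1)) n)
  refine ⟨fun n => Nat.casesOn n (⨆ n, d (n+1))ᶜ (fun k => d (k+1)), ?_, ?_, ?_⟩
  · rintro (_ | n)
    · exact fun h => h0 0 (le_bot_iff.1 (key.trans h.le))
    · exact h0 _
  · rintro (_ | m) (_ | n) h
    · exact absurd rfl h
    · exact hz n
    · exact (hz m).symm
    · rcases lt_or_gt_of_ne h with h | h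
      · exact hd _ _ h
      · exact (hd _ _ h).symm
  · intro x hx
    have h1 : (⨆ n, d (n+1)) ≤ x := iSup_le fun n => hx (n+1)
    have h2 : (⨆ n, d (n+1))ᶜ ≤ x := hx 0
    rw [← top_le_iff, ← sup_compl_eq_top (x := ⨆ n, d (n+1))]
    exact sup_le h1 h2

theorem infinite_complete_not_hereditary_atomic {B : Type*} [CompleteBooleanAlgebra B]
    [Infinite B] :
    ∃ C : Set B, IsBoolSubalgebra C ∧ ¬ SubalgAtomic C := by
  obtain ⟨d, h0, hd, htop⟩ := exists_partition (B := B)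
  let C : Set B := {x | (∀ n, d n ≤ x ∨ d n ≤ xᶜ) ∧
    ∃ k : ℕ, ∀ m n, m ≡ n [MOD 2 ^ k] → d m ≤ x → d n ≤ x}
  have hnot : ∀ n x, d n ≤ x → d n ≤ xᶜ → False := fun n x h h' =>
    h0 n (le_bot_iff.1 ((le_inf h h').trans (inf_compl_eq_bot).le))
  have hcompl : ∀ x ∈ C, xᶜ ∈ C := by
    rintro x ⟨h1, k, hk⟩
    refine ⟨fun n => by rw [compl_compl]; exact (h1 n).symm, k, fun m n hmn hm => ?_⟩
    exact (h1 n).resolve_left fun hn => hnot m x (hk n m hmn.symm hn) hm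
  have hinf : ∀ x ∈ C, ∀ y ∈ C, x ⊓ y ∈ C := by
    rintro x ⟨h1, k, hk⟩ y ⟨h2, l, hl⟩
    refine ⟨fun n => ?_, k + l, fun m n hmn hm => ?_⟩
    · rw [compl_inf]
      rcases h1 n with h | h
      · rcases h2 n with h' | h'
        · exact Or.inl (le_inf h h')
        · exact Or.inr (h'.trans le_sup_right)
      · exact Or.inr (h.trans le_sup_left)
    · exact le_inf
        (hk m n (hmn.of_dvd (pow_dvd_pow 2 (Nat.le_add_right k l))) (hm.trans inf_le_left))
        (hl m n (hmn.of_dvd (pow_dvd_pow 2 (Nat.le_add_left l k))) (hm.trans inf_le_right))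
  have hT : (⊤ : B) ∈ C := ⟨fun n => Or.inl le_top, 0, fun _ _ _ _ => le_top⟩
  refine ⟨C, ⟨hT, by simpa using hcompl _ hT, hinf, fun x hx y hy => ?_, hcompl⟩, fun hat => ?_⟩
  · simpa using hcompl _ (hinf _ (hcompl x hx) _ (hcompl y hy))
  have htb : (⊤ : B) ≠ ⊥ := fun h => h0 0 (le_bot_iff.1 (le_top.trans h.le))
  obtain ⟨a, ⟨ha1, k, hk⟩, hab, hmin, -⟩ := hat ⊤ hT htb
  obtain ⟨n, hn⟩ : ∃ n, d n ≤ a := by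
    by_contra! h
    exact hab (compl_eq_top.1 (htop aᶜ fun n => (ha1 n).resolve_left (h n)))
  let y : B := ⨆ m, ⨆ _ : m ≡ n [MOD 2 ^ (k+1)], d m
  have hy1 : ∀ m, m ≡ n [MOD 2 ^ (k+1)] → d m ≤ y := fun m hm => le_iSup₂_of_le m hm le_rfl
  have hy2 : ∀ m, ¬ m ≡ n [MOD 2 ^ (k+1)] → d m ≤ yᶜ := fun m hm => by
    rw [le_compl_iff_disjoint_right, disjoint_iSup₂_iff]
    exact fun j hj => hd _ _ fun h => hm (h ▸ hj)
  have hyC : y ∈ C := by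
    refine ⟨fun m => ?_, k+1, fun m j hmj hm => ?_⟩
    · by_cases h : m ≡ n [MOD 2 ^ (k+1)]
      · exact Or.inl (hy1 m h)
      · exact Or.inr (hy2 m h)
    · by_cases h : m ≡ n [MOD 2 ^ (k+1)]
      · exact hy1 j (hmj.symm.trans h)
      · exact (hnot m y hm (hy2 m h)).elim
  have hya : y ≤ a := iSup₂_le fun m hm =>
    hk n m (hm.symm.of_dvd (pow_dvd_pow 2 (Nat.le_succ k))) hn
  rcases hmin y hyC hya with h | h
  · exact h0 n (le_bot_iff.1 ((hy1 n rfl).trans h.le))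
  · have h3 : d (n + 2 ^ k) ≤ a := hk n _ (by simp [Nat.ModEq]) hn
    refine hnot (n + 2 ^ k) y (h ▸ h3) (hy2 _ fun h4 => ?_)
    have h5 : 2 ^ (k+1) ∣ 2 ^ k := by
      have := (Nat.modEq_iff_dvd' (Nat.le_add_right n (2^k))).1 h4.symm
      simpa using this
    have := (Nat.pow_dvd_pow_iff_le_right (by norm_num : 1 < 2)).1 h5
    omega
end
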